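/- arXiv:2401.14222 — 2 statements merged into one kernel-verified Lean document; each statement's English description precedes it below -/
import Mathlib

section
/- Let F be an infinite field and let K be a subfield of F such that the subgroup {u ∈ F^× : u ∈ K} of the multiplicative group F^× has finite index in F^×. Then K = F. -/
/-- The subgroup of the multiplicative group `Fˣ` consisting of units lying in the
subfield `K`. -/
def Subfield.unitsIn {F : Type*} [Field F] (K : Subfield F) : Subgroup Fˣ where
  carrier := {u : Fˣ | (u : F) ∈ K}
  one_mem' := K.one_mem
  mul_mem' := fun ha hb => K.mul_mem ha hb
  inv_mem' := fun {a} ha => by simpa using K.inv_mem ha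

/-- If `F` is an infinite field and `K` a subfield whose group of units has finite index
in `Fˣ`, then `K = F`. -/
theorem subfield_eq_top_of_finiteIndex_units {F : Type*} [Field F] [Infinite F]
    (K : Subfield F) (h : (Subfield.unitsIn K).FiniteIndex) : K = ⊤ := by
  have hq : Finite (Fˣ ⧸ Subfield.unitsIn K) := inferInstance
  have hK : Infinite K := by
    by_contra hfin
    rw [not_infinite_iff_finite] at hfin
    have h1 : Finite (Subfield.unitsIn K) :=
      Finite.of_injective (fun u => (⟨((u : Fˣ) : F), u.2⟩ : K)) (by
        intro u v huv
        have := congrArg (fun x : K => (x : F)) huv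
        exact Subtype.ext (Units.ext this))
    have h2 : Finite Fˣ :=
      Finite.of_equiv _ (Subgroup.groupEquivQuotientProdSubgroup (s := Subfield.unitsIn K)).symm
    have h3 : Finite F := by
      classical
      refine Finite.of_surjective (fun o : Option Fˣ => o.elim (0 : F) (fun u => (u : F))) ?_
      intro x
      by_cases hx : x = 0
      · exact ⟨none, hx.symm⟩
      · exact ⟨some (Units.mk0 x hx), rfl⟩
    exact not_finite F
  rw [eq_top_iff]
  intro a _
  by_contra ha
  have hne : ∀ k : K, a + k ≠ 0 := fun k hk => ha (by
    rw [eq_neg_of_add_eq_zero_left hk]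
    exact K.neg_mem k.2)
  obtain ⟨k, l, hkl, heq⟩ := Finite.exists_ne_map_eq_of_infinite
    (fun k : K => (QuotientGroup.mk (Units.mk0 (a + k) (hne k)) : Fˣ ⧸ Subfield.unitsIn K))
  have hc : (((Units.mk0 (a + k) (hne k))⁻¹ * Units.mk0 (a + l) (hne l) : Fˣ) : F) ∈ K :=
    QuotientGroup.eq.mp heq
  simp only [Units.val_mul, Units.val_inv_eq_inv_val, Units.val_mk0] at hc
  obtain ⟨c, hcdef⟩ : ∃ c, c = (a + (k : F))⁻¹ * (a + l) := ⟨_, rfl⟩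
  rw [← hcdef] at hc
  have e : (a + k) * c = a + l := by
    rw [hcdef, mul_inv_cancel_left₀ (hne k)]
  have hc1 : c - 1 ≠ 0 := by
    intro h1
    rw [sub_eq_zero.mp h1, mul_one] at e
    exact hkl (Subtype.ext (add_left_cancel e))
  apply ha
  have : a = (l - k * c) / (c - 1) := by
    rw [eq_div_iff hc1]
    linear_combination e
  rw [this]
  exact K.div_mem (K.sub_mem l.2 (K.mul_mem k.2 hc)) (K.sub_mem hc K.one_mem)
end

section
/- Let F be an infinite field, let σ be a ring automorphism of F, and let H be a subgroup of finite index in the multiplicative group F^×. If σ fixes every element of H, then σ is the identity automorphism of F. -/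
/-- If `F` is an infinite field, `σ` a ring automorphism of `F`, and `H` a finite-index
subgroup of the multiplicative group `Fˣ` fixed pointwise by `σ`, then `σ` is the
identity automorphism. -/
theorem ringAut_eq_refl_of_fixes_finiteIndex_subgroup {F : Type*} [Field F] [Infinite F]
    (σ : F ≃+* F) (H : Subgroup Fˣ) (hH : H.FiniteIndex)
    (hfix : ∀ u : Fˣ, u ∈ H → σ u = u) : σ = RingEquiv.refl F := by
  have hunits : Infinite Fˣ := by
    by_contra hf
    rw [not_infinite_iff_finite] at hf
    have h2 : ({0}ᶜ : Set F).Finite := by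
      refine (Set.finite_range (fun u : Fˣ => (u : F))).subset ?_
      intro a ha
      exact ⟨Units.mk0 a ha, rfl⟩
    exact (Set.finite_singleton (0 : F)).infinite_compl h2
  have hinf : Infinite H := by
    by_contra hf
    rw [not_infinite_iff_finite] at hf
    have : Finite (Fˣ ⧸ H) := inferInstance
    have : Finite Fˣ := Finite.of_equiv _ (Subgroup.groupEquivQuotientProdSubgroup (s := H)).symm
    exact not_finite Fˣ
  ext x
  by_contra hx
  change ¬ σ x = x at hx
  have hne : ∀ c : H, x + ((c : Fˣ) : F) ≠ 0 := by
    intro c h0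
    apply hx
    have hxe : x = -((c : Fˣ) : F) := eq_neg_of_add_eq_zero_left h0
    rw [hxe, map_neg, hfix _ c.2]
  obtain ⟨c, d, hcd, hq⟩ := Finite.exists_ne_map_eq_of_infinite
    (fun c : H => (QuotientGroup.mk (Units.mk0 _ (hne c)) : Fˣ ⧸ H))
  have hm := QuotientGroup.eq.mp hq
  set h := (Units.mk0 _ (hne c))⁻¹ * Units.mk0 _ (hne d) with hh
  have e1 : x + ((d : Fˣ) : F) = (x + ((c : Fˣ) : F)) * (h : F) := by
    have : Units.mk0 _ (hne d) = Units.mk0 _ (hne c) * h := by rw [hh, mul_inv_cancel_left]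
    simpa using congrArg Units.val this
  have e2 := congrArg σ e1
  rw [map_mul, map_add, map_add, hfix _ d.2, hfix _ c.2, hfix _ hm] at e2
  have e3 : (σ x - x) * ((h : F) - 1) = 0 := by linear_combination e1 - e2
  have e4 : (h : F) = 1 := by
    rcases mul_eq_zero.mp e3 with h3 | h3
    · exact absurd (sub_eq_zero.mp h3) hx
    · exact sub_eq_zero.mp h3
  apply hcd
  rw [e4, mul_one] at e1
  exact Subtype.ext (Units.ext (add_left_cancel e1).symm)
end
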